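/- arXiv:2604.27055 — 2 statements merged into one kernel-verified Lean document; each statement's English description precedes it below -/
import Mathlib

section
/- Let L = m + n with 1 ≤ m ≤ n, and let Γ be a real antisymmetric 2L×2L matrix (Γᵀ = −Γ) with Γ² = −𝟙, indexed so that the first 2m indices belong to subsystem A and the last 2n to subsystem B. Then there exist orthogonal matrices O_A ∈ O(2m, ℝ), O_B ∈ O(2n, ℝ) and real numbers ν₁,…,ν_m ∈ [0,1] such that, with μ_k = √(1 − ν_k²), (O_A ⊕ O_B) Γ (O_A ⊕ O_B)ᵀ is, up to a permutation of rows and columns pairing the k-th A-mode with the k-th B-mode, the block-diagonal matrix ⨁_{k=1}^{m} Γ_k ⊕ ⨁_{ℓ=1}^{n−m} J, where Γ_k is the 4×4 matrix with rows (0, ν_k, μ_k, 0), (−ν_k, 0, 0, μ_k), (−μ_k, 0, 0, −ν_k), (0, −μ_k, ν_k, 0) and J = [[0,1],[−1,0]]. -/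
open Matrix

/-- The canonical 4×4 covariance block of one entangled fermionic mode pair. -/
def gammaBlock (ν μ : ℝ) : Matrix (Fin 4) (Fin 4) ℝ :=
  !![0, ν, μ, 0; -ν, 0, 0, μ; -μ, 0, 0, -ν; 0, -μ, ν, 0]

/-- The 2×2 local pure block J. -/
def Jblock : Matrix (Fin 2) (Fin 2) ℝ := !![0, 1; -1, 0]

section helpers
open scoped RealInnerProductSpace

theorem skew_step {E : Type*} [NormedAddCommGroup E] [InnerProductSpace ℝ E]
    [FiniteDimensional ℝ E] (X : E →ₗ[ℝ] E) (hX : ∀ x y, ⟪X x, y⟫ = -⟪x, X y⟫)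
    (hd : 2 ≤ Module.finrank ℝ E) :
    ∃ (a b : E) (ν : ℝ), 0 ≤ ν ∧ ⟪a, a⟫ = 1 ∧ ⟪b, b⟫ = 1 ∧ ⟪a, b⟫ = 0 ∧
      X a = -ν • b ∧ X b = ν • a := by
  by_cases h0 : X = 0
  · let s := stdOrthonormalBasis ℝ E
    have hs := orthonormal_iff_ite.mp s.orthonormal
    refine ⟨s ⟨0, by omega⟩, s ⟨1, by omega⟩, 0, le_rfl, ?_, ?_, ?_, ?_, ?_⟩
    · rw [hs]; simp
    · rw [hs]; simp
    · rw [hs]; simp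
    · simp [h0]
    · simp [h0]
  · have hT : (X ∘ₗ X).IsSymmetric := by
      intro x y
      simp only [LinearMap.comp_apply]
      rw [hX, hX]; simp
    have hex : ∃ i, hT.eigenvalues rfl i ≠ 0 := by
      by_contra! hall
      apply h0
      have hXX : X ∘ₗ X = 0 := by
        apply (hT.eigenvectorBasis rfl).toBasis.ext
        intro i
        have := hT.apply_eigenvectorBasis rfl i
        rw [hall i] at this
        simpa using this
      ext x
      have h1 : X (X x) = 0 := by
        simpa using congrArg (fun f => f x) hXX
      have h2 : ⟪X x, X x⟫ = 0 := by rw [hX, h1]; simp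
      simpa using h2
    obtain ⟨i, hi⟩ := hex
    set a := hT.eigenvectorBasis rfl i with ha
    set l := hT.eigenvalues rfl i with hl
    have haa : ⟪a, a⟫ = 1 := by
      rw [ha, orthonormal_iff_ite.mp (hT.eigenvectorBasis rfl).orthonormal]; simp
    have hXa : X (X a) = l • a := by
      exact hT.apply_eigenvectorBasis rfl i
    have hn : ⟪X a, X a⟫ = -l := by
      rw [hX, hXa, inner_smul_right, haa]; simp
    have hax : ⟪a, X a⟫ = 0 := by
      have := hX a a
      rw [real_inner_comm] at this
      linarith
    have hsq : ‖X a‖ * ‖X a‖ = -l := by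
      rw [← hn, real_inner_self_eq_norm_mul_norm]
    have hne : ‖X a‖ ≠ 0 := by
      intro h; rw [h] at hsq; apply hi; linarith
    refine ⟨a, -‖X a‖⁻¹ • X a, ‖X a‖, norm_nonneg _, haa, ?_, ?_, ?_, ?_⟩
    · rw [inner_smul_left, inner_smul_right, hn, ← hsq]
      simp
      field_simp
    · rw [inner_smul_right, hax]; simp
    · rw [smul_smul]; simp [hne]
    · rw [map_smul, hXa, smul_smul]
      congr 1
      have : l = -(‖X a‖ * ‖X a‖) := by linarith
      rw [this]; field_simp

theorem skew_family (m : ℕ) : ∀ {E : Type*} [NormedAddCommGroup E] [InnerProductSpace ℝ E]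
    [FiniteDimensional ℝ E] (X : E →ₗ[ℝ] E) (_ : ∀ x y, ⟪X x, y⟫ = -⟪x, X y⟫)
    (_ : Module.finrank ℝ E = 2 * m),
    ∃ (v : Fin m → Fin 2 → E) (ν : Fin m → ℝ), (∀ k, 0 ≤ ν k) ∧
      (∀ k i l j, ⟪v k i, v l j⟫ = if k = l ∧ i = j then 1 else 0) ∧
      (∀ k, X (v k 0) = -ν k • v k 1) ∧ (∀ k, X (v k 1) = ν k • v k 0) := by
  induction m with
  | zero =>
    intro E _ _ _ X hX hd
    exact ⟨fun k => k.elim0, fun k => k.elim0, fun k => k.elim0, fun k => k.elim0,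
      fun k => k.elim0, fun k => k.elim0⟩
  | succ m ih =>
    intro E _ _ _ X hX hd
    obtain ⟨a, b, ν, hν, haa, hbb, hab, hXa, hXb⟩ := skew_step X hX (by omega)
    have hba : ⟪b, a⟫ = 0 := by rw [real_inner_comm]; exact hab
    have hna : ‖a‖ = 1 := by
      have := real_inner_self_eq_norm_sq a
      rw [haa] at this
      nlinarith [norm_nonneg a]
    have hnb : ‖b‖ = 1 := by
      have := real_inner_self_eq_norm_sq b
      rw [hbb] at this
      nlinarith [norm_nonneg b]
    have hon : Orthonormal ℝ ![a, b] := by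
      rw [orthonormal_iff_ite]
      intro i j
      fin_cases i <;> fin_cases j <;> simp [hab, hba, hna, hnb]
    let W := Submodule.span ℝ (Set.range ![a, b])
    have hW : Module.finrank ℝ W = 2 := by
      have := finrank_span_eq_card hon.linearIndependent
      simpa using this
    have hmem : ∀ s, s ∈ Wᗮ ↔ ⟪a, s⟫ = 0 ∧ ⟪b, s⟫ = 0 := by
      intro s
      constructor
      · intro hs
        rw [Submodule.mem_orthogonal] at hs
        exact ⟨hs a (Submodule.subset_span ⟨0, rfl⟩), hs b (Submodule.subset_span ⟨1, rfl⟩)⟩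
      · rintro ⟨h1, h2⟩
        rw [Submodule.mem_orthogonal]
        intro u hu
        induction hu using Submodule.span_induction with
        | mem x hx =>
          obtain ⟨i, rfl⟩ := hx
          fin_cases i
          · exact h1
          · exact h2
        | zero => simp
        | add x y _ _ hx hy => rw [inner_add_left, hx, hy, add_zero]
        | smul c x _ hx => rw [inner_smul_left, hx, mul_zero]
    have hS : Module.finrank ℝ Wᗮ = 2 * m := by
      have := Submodule.finrank_add_finrank_orthogonal W
      omega
    have hinv : ∀ s ∈ Wᗮ, X s ∈ Wᗮ := by
      intro s hs
      rw [hmem] at hs ⊢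
      have e1 := hX a s
      have e2 := hX b s
      rw [hXa, inner_smul_left, hs.2] at e1
      rw [hXb, inner_smul_left, hs.1] at e2
      constructor <;> linarith
    obtain ⟨v, μ, hμ, hv, h0, h1⟩ := ih (X.restrict hinv)
      (by intro x y; simpa using hX x y) hS
    have hav : ∀ k i, ⟪a, (v k i : E)⟫ = 0 := fun k i => ((hmem _).mp (v k i).2).1
    have hbv : ∀ k i, ⟪b, (v k i : E)⟫ = 0 := fun k i => ((hmem _).mp (v k i).2).2
    have hva : ∀ k i, ⟪(v k i : E), a⟫ = 0 := fun k i => by rw [real_inner_comm, hav]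
    have hvb : ∀ k i, ⟪(v k i : E), b⟫ = 0 := fun k i => by rw [real_inner_comm, hbv]
    refine ⟨Fin.cons ![a, b] (fun k i => (v k i : E)), Fin.cons ν μ, ?_, ?_, ?_, ?_⟩
    · intro k
      refine Fin.cases ?_ (fun k => ?_) k
      · simpa using hν
      · simpa using hμ k
    · intro k i l j
      refine Fin.cases ?_ (fun k => ?_) k <;> refine Fin.cases ?_ (fun l => ?_) l
      · fin_cases i <;> fin_cases j <;> simp [hab, hba, hna, hnb]
      · fin_cases i <;> simp [hav, hbv, (Fin.succ_ne_zero l).symm]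
      · fin_cases j <;> simp [hva, hvb]
      · have := hv k i l j
        simpa using this
    · intro k
      refine Fin.cases ?_ (fun k => ?_) k
      · simpa using hXa
      · have := congrArg Subtype.val (h0 k)
        simpa using this
    · intro k
      refine Fin.cases ?_ (fun k => ?_) k
      · simpa using hXb
      · have := congrArg Subtype.val (h1 k)
        simpa using this

theorem skew_family' {ι : Type*} [Fintype ι] [DecidableEq ι] {E : Type*}
    [NormedAddCommGroup E] [InnerProductSpace ℝ E]
    [FiniteDimensional ℝ E] (X : E →ₗ[ℝ] E) (hX : ∀ x y, ⟪X x, y⟫ = -⟪x, X y⟫)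
    (hd : Module.finrank ℝ E = 2 * Fintype.card ι) :
    ∃ (v : ι → Fin 2 → E) (ν : ι → ℝ), (∀ k, 0 ≤ ν k) ∧
      (∀ k i l j, ⟪v k i, v l j⟫ = if k = l ∧ i = j then 1 else 0) ∧
      (∀ k, X (v k 0) = -ν k • v k 1) ∧ (∀ k, X (v k 1) = ν k • v k 0) := by
  obtain ⟨v, ν, h1, h2, h3, h4⟩ := skew_family _ X hX hd
  let f := Fintype.equivFin ι
  refine ⟨fun k => v (f k), fun k => ν (f k), fun k => h1 _, ?_, fun k => h3 _, fun k => h4 _⟩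
  intro k i l j
  rw [h2]; simp

/-- The abstract two-subsystem normal form. -/
theorem abstract_form (m r : ℕ) {E F : Type*}
    [NormedAddCommGroup E] [InnerProductSpace ℝ E] [FiniteDimensional ℝ E]
    [NormedAddCommGroup F] [InnerProductSpace ℝ F] [FiniteDimensional ℝ F]
    (hE : Module.finrank ℝ E = 2 * m) (hF : Module.finrank ℝ F = 2 * (m + r))
    (X : E →ₗ[ℝ] E) (Y : F →ₗ[ℝ] F) (C : E →ₗ[ℝ] F) (D : F →ₗ[ℝ] E)
    (hX : ∀ x y, ⟪X x, y⟫ = -⟪x, X y⟫) (hY : ∀ x y, ⟪Y x, y⟫ = -⟪x, Y y⟫)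
    (hCD : ∀ x y, ⟪C x, y⟫ = -⟪x, D y⟫)
    (h11 : ∀ x, X (X x) + D (C x) = -x) (h21 : ∀ x, C (X x) + Y (C x) = 0)
    (h12 : ∀ y, X (D y) + D (Y y) = 0) (h22 : ∀ y, C (D y) + Y (Y y) = -y) :
    ∃ (a : Fin m → Fin 2 → E) (b : Fin m → Fin 2 → F) (c : Fin r → Fin 2 → F) (ν : Fin m → ℝ),
      (∀ k, 0 ≤ ν k ∧ ν k ≤ 1) ∧
      (∀ k i l j, ⟪a k i, a l j⟫ = if k = l ∧ i = j then 1 else 0) ∧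
      (∀ k i l j, ⟪b k i, b l j⟫ = if k = l ∧ i = j then 1 else 0) ∧
      (∀ k i l j, ⟪c k i, c l j⟫ = if k = l ∧ i = j then 1 else 0) ∧
      (∀ k i l j, ⟪b k i, c l j⟫ = 0) ∧
      (∀ k, X (a k 0) = -ν k • a k 1) ∧ (∀ k, X (a k 1) = ν k • a k 0) ∧
      (∀ k i, C (a k i) = -Real.sqrt (1 - ν k ^ 2) • b k i) ∧
      (∀ k, Y (b k 0) = ν k • b k 1) ∧ (∀ k, Y (b k 1) = -ν k • b k 0) ∧
      (∀ k, Y (c k 0) = -c k 1) ∧ (∀ k, Y (c k 1) = c k 0) := by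
  obtain ⟨a, ν, hν, ha, ha0, ha1⟩ := skew_family m X hX hE
  have hXX : ∀ k i, X (X (a k i)) = -(ν k ^ 2) • a k i := by
    intro k i
    fin_cases i
    · simp [ha0, ha1, smul_smul, sq]
    · simp [ha0, ha1, smul_smul, sq]
  have hCC : ∀ k i l j, ⟪C (a k i), C (a l j)⟫ = if k = l ∧ i = j then 1 - ν k ^ 2 else 0 := by
    intro k i l j
    have e : D (C (a l j)) = -(1 - ν l ^ 2) • a l j := by
      have := h11 (a l j)
      rw [hXX] at this
      have h : D (C (a l j)) = -a l j - -(ν l ^ 2) • a l j := by rw [← this]; abel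
      rw [h]; module
    rw [hCD, e, inner_smul_right, ha]
    split_ifs with h
    · rw [h.1]; ring
    · simp
  have hν1 : ∀ k, 0 ≤ 1 - ν k ^ 2 := by
    intro k
    have := hCC k 0 k 0
    simp only [and_self, if_true] at this
    rw [← this]; exact real_inner_self_nonneg
  set μ : Fin m → ℝ := fun k => Real.sqrt (1 - ν k ^ 2) with hμdef
  have hμ2 : ∀ k, μ k * μ k = 1 - ν k ^ 2 := fun k => Real.mul_self_sqrt (hν1 k)
  have hC0 : ∀ k i, μ k = 0 → C (a k i) = 0 := by
    intro k i h
    have := hCC k i k i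
    rw [← hμ2, h] at this
    simpa using this
  have hν_one : ∀ k, μ k = 0 → ν k = 1 := by
    intro k h
    have := hμ2 k
    rw [h] at this
    have h' := hν k
    nlinarith
  -- the normalized images
  let u : {k : Fin m // μ k ≠ 0} × Fin 2 → F := fun p => -(μ p.1)⁻¹ • C (a p.1 p.2)
  have hu : Orthonormal ℝ u := by
    rw [orthonormal_iff_ite]
    rintro ⟨⟨k, hk⟩, i⟩ ⟨⟨l, hl⟩, j⟩
    simp only [u, inner_smul_left, inner_smul_right, hCC, ← hμ2, Prod.mk.injEq, Subtype.mk.injEq]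
    split_ifs with h
    · obtain ⟨rfl, rfl⟩ := h
      simp
      field_simp
    · simp
  let W := Submodule.span ℝ (Set.range u)
  have hWd : Module.finrank ℝ W = Fintype.card {k : Fin m // μ k ≠ 0} * 2 := by
    have := finrank_span_eq_card hu.linearIndependent
    simpa using this
  have hcard : Fintype.card {k : Fin m // μ k = 0} + Fintype.card {k : Fin m // μ k ≠ 0} = m := by
    have := Fintype.card_subtype_compl (fun k : Fin m => μ k = 0)
    have h2 := Fintype.card_subtype_le (fun k : Fin m => μ k = 0)
    simp only [Fintype.card_fin] at this h2
    simp only [ne_eq]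
    omega
  have haon : Orthonormal ℝ (fun p : Fin m × Fin 2 => a p.1 p.2) := by
    rw [orthonormal_iff_ite]
    rintro ⟨k, i⟩ ⟨l, j⟩
    simp [ha]
  have hspan : ⊤ ≤ Submodule.span ℝ (Set.range (fun p : Fin m × Fin 2 => a p.1 p.2)) := by
    apply (haon.linearIndependent.span_eq_top_of_card_eq_finrank' ?_).ge
    simp [hE, mul_comm]
  have hzero : ∀ x : E, (∀ k i, ⟪a k i, x⟫ = 0) → x = 0 := by
    intro x hx
    have hh : ∀ y ∈ Submodule.span ℝ (Set.range (fun p : Fin m × Fin 2 => a p.1 p.2)),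
        ⟪y, x⟫ = 0 := by
      intro y hy
      induction hy using Submodule.span_induction with
      | mem y hy => obtain ⟨p, rfl⟩ := hy; exact hx _ _
      | zero => simp
      | add x y _ _ hx hy => rw [inner_add_left, hx, hy, add_zero]
      | smul c x _ hx => rw [inner_smul_left, hx, mul_zero]
    have := hh x (hspan trivial)
    simpa using this
  have hmem : ∀ s, s ∈ Wᗮ ↔ D s = 0 := by
    intro s
    rw [Submodule.mem_orthogonal]
    constructor
    · intro hs
      apply hzero
      intro k i
      have : ⟪C (a k i), s⟫ = 0 := by
        by_cases hk : μ k = 0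
        · rw [hC0 k i hk, inner_zero_left]
        · have := hs (u (⟨k, hk⟩, i)) (Submodule.subset_span ⟨_, rfl⟩)
          simp only [u, inner_smul_left] at this
          simpa [hk] using this
      rw [hCD] at this
      linarith
    · intro hs w hw
      induction hw using Submodule.span_induction with
      | mem y hy =>
        obtain ⟨p, rfl⟩ := hy
        simp only [u, inner_smul_left, hCD, hs, inner_zero_right]; simp
      | zero => simp
      | add x y _ _ hx hy => rw [inner_add_left, hx, hy, add_zero]
      | smul c x _ hx => rw [inner_smul_left, hx, mul_zero]
  have hinv : ∀ s ∈ Wᗮ, Y s ∈ Wᗮ := by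
    intro s hs
    rw [hmem] at hs ⊢
    have := h12 s
    rw [hs] at this
    simpa using this
  have hSd : Module.finrank ℝ Wᗮ = 2 * Fintype.card ({k : Fin m // μ k = 0} ⊕ Fin r) := by
    have := Submodule.finrank_add_finrank_orthogonal W
    rw [Fintype.card_sum, Fintype.card_fin]
    omega
  obtain ⟨w, κ, hκ, hw, hw0, hw1⟩ := skew_family' (Y.restrict hinv)
    (by intro x y; simpa using hY x y) hSd
  have hw0' : ∀ k, Y (w k 0 : F) = -κ k • (w k 1 : F) := fun k => by
    simpa using congrArg Subtype.val (hw0 k)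
  have hw1' : ∀ k, Y (w k 1 : F) = κ k • (w k 0 : F) := fun k => by
    simpa using congrArg Subtype.val (hw1 k)
  have hw' : ∀ k i l j, ⟪(w k i : F), (w l j : F)⟫ = if k = l ∧ i = j then 1 else 0 := hw
  have hDw : ∀ k i, D (w k i : F) = 0 := fun k i => (hmem _).mp (w k i).2
  have hκ1 : ∀ k, κ k = 1 := by
    intro k
    have e := h22 (w k 0 : F)
    rw [hDw, map_zero, zero_add, hw0', map_smul, hw1', smul_smul] at e
    have e2 := congrArg (fun z => ⟪(w k 0 : F), z⟫) e
    simp only [inner_smul_right, inner_neg_right, hw'] at e2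
    simp at e2
    have := hκ k
    nlinarith
  have hCw : ∀ x k i, ⟪C x, (w k i : F)⟫ = 0 := by
    intro x k i; rw [hCD, hDw]; simp
  have hwC : ∀ x k i, ⟪(w k i : F), C x⟫ = 0 := by
    intro x k i; rw [real_inner_comm, hCw]
  refine ⟨a, fun k i => if h : μ k = 0 then (w (Sum.inl ⟨k, h⟩) (1 - i) : F)
      else -(μ k)⁻¹ • C (a k i), fun k i => (w (Sum.inr k) i : F), ν, ?_, ha, ?_, ?_, ?_, ha0,
      ha1, ?_, ?_, ?_, ?_, ?_⟩
  · intro k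
    refine ⟨hν k, ?_⟩
    have := hν1 k
    have := hν k
    nlinarith
  · intro k i l j
    by_cases hk : μ k = 0 <;> by_cases hl : μ l = 0
    · simp only [hk, hl, dif_pos, hw']
      simp
    · have : k ≠ l := by rintro rfl; exact hl hk
      simp [hk, hl, inner_smul_right, hwC, this]
    · have : k ≠ l := by rintro rfl; exact hk hl
      simp [hk, hl, inner_smul_left, hCw, this]
    · have := orthonormal_iff_ite.mp hu (⟨k, hk⟩, i) (⟨l, hl⟩, j)
      simp only [hk, hl, dif_neg, not_false_eq_true]
      simpa [u] using this
  · intro k i l j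
    rw [hw']; simp
  · intro k i l j
    by_cases hk : μ k = 0
    · simp only [hk, dif_pos, hw']; simp
    · simp [hk, inner_smul_left, hCw]
  · intro k i
    by_cases hk : μ k = 0
    · have h' : √(1 - ν k ^ 2) = 0 := hk
      simp [h', hC0 k i hk]
    · have h' : √(1 - ν k ^ 2) = μ k := rfl
      simp [h', hk, smul_smul]
  · intro k
    by_cases hk : μ k = 0
    · simp [hk, hw1', hκ1, hν_one k hk]
    · have := h21 (a k 0)
      rw [ha0] at this
      have e : Y (C (a k 0)) = ν k • C (a k 1) := by
        rw [eq_neg_of_add_eq_zero_right this]; simp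
      simp only [hk, dif_neg, not_false_eq_true, map_smul, e, smul_smul]
      congr 1; ring
  · intro k
    by_cases hk : μ k = 0
    · simp [hk, hw0', hκ1, hν_one k hk]
    · have := h21 (a k 1)
      rw [ha1] at this
      have e : Y (C (a k 1)) = -ν k • C (a k 0) := by
        rw [eq_neg_of_add_eq_zero_right this]; simp
      simp only [hk, dif_neg, not_false_eq_true, map_smul, e, smul_smul]
      congr 1; ring
  · intro k; rw [hw0', hκ1]; simp
  · intro k; rw [hw1', hκ1]; simp

theorem lin_adj {α β : Type*} [Fintype α] [Fintype β] [DecidableEq α] [DecidableEq β]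
    (M : Matrix α β ℝ) (x : EuclideanSpace ℝ β) (y : EuclideanSpace ℝ α) :
    ⟪Matrix.toEuclideanLin M x, y⟫ = ⟪x, Matrix.toEuclideanLin Mᵀ y⟫ := by
  simp only [EuclideanSpace.inner_eq_star_dotProduct, star_trivial, Matrix.toLpLin_apply,
    Matrix.mulVec_transpose]
  rw [dotProduct_mulVec]

theorem entry_eq {α β γ δ : Type*} [Fintype α] [Fintype β] [DecidableEq α] [DecidableEq β]
    (M : Matrix α β ℝ) (p : γ → EuclideanSpace ℝ α) (q : δ → EuclideanSpace ℝ β) (x : γ) (y : δ) :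
    ((Matrix.of fun x i => p x i) * M * (Matrix.of fun y j => q y j)ᵀ) x y
      = ⟪p x, Matrix.toEuclideanLin M (q y)⟫ := by
  simp only [EuclideanSpace.inner_eq_star_dotProduct, star_trivial, Matrix.toLpLin_apply]
  rw [Matrix.mul_assoc, Matrix.mul_apply, dotProduct_comm]
  rfl

theorem orth_mem {α : Type*} [Fintype α] [DecidableEq α] (p : α → EuclideanSpace ℝ α)
    (h : ∀ x y, ⟪p x, p y⟫ = if x = y then 1 else 0) :
    (Matrix.of fun x i => p x i) ∈ Matrix.orthogonalGroup α ℝ := by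
  rw [Matrix.mem_orthogonalGroup_iff]
  ext x y
  have := entry_eq (1 : Matrix α α ℝ) p p x y
  rw [Matrix.mul_one] at this
  refine this.trans ?_
  rw [Matrix.one_apply, ← h]
  simp [Matrix.toLpLin_one]

theorem lin_mul_apply {α β γ : Type*} [Fintype α] [Fintype β] [Fintype γ] [DecidableEq α]
    [DecidableEq β] [DecidableEq γ]
    (M : Matrix α β ℝ) (N : Matrix β γ ℝ) (x : EuclideanSpace ℝ γ) :
    Matrix.toEuclideanLin M (Matrix.toEuclideanLin N x) = Matrix.toEuclideanLin (M * N) x := by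
  simp [Matrix.toLpLin_apply]

/-- The relabelling of modes. -/
def modeEquiv (m r : ℕ) :
    (Fin 2 × Fin m) ⊕ ((Fin 2 × Fin m) ⊕ (Fin 2 × Fin r)) ≃ (Fin 4 × Fin m) ⊕ (Fin 2 × Fin r) :=
  (Equiv.sumAssoc _ _ _).symm.trans
    (Equiv.sumCongr ((Equiv.sumProdDistrib _ _ _).symm.trans
      (Equiv.prodCongr (finSumFinEquiv (m := 2) (n := 2)) (Equiv.refl _))) (Equiv.refl _))

theorem norm_one_of {E : Type*} [NormedAddCommGroup E] [InnerProductSpace ℝ E] {a : E}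
    (h : ⟪a, a⟫ = 1) : ‖a‖ = 1 := by
  have := real_inner_self_eq_norm_sq a
  rw [h] at this
  nlinarith [norm_nonneg a]

end helpers

/-- Bipartite canonical form of a pure Gaussian covariance matrix: there exist local
orthogonal transformations O_A, O_B and numbers ν_k ∈ [0,1] such that
(O_A ⊕ O_B) Γ (O_A ⊕ O_B)ᵀ is, up to a permutation of rows and columns pairing the
k-th A-mode with the k-th B-mode, the block-diagonal matrix
⨁_k Γ_k ⊕ ⨁_ℓ J, with μ_k = √(1 − ν_k²). -/
theorem bipartite_canonical_form (m n : ℕ) (hm : 1 ≤ m) (hmn : m ≤ n)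
    (Γ : Matrix (Fin (2 * m) ⊕ Fin (2 * n)) (Fin (2 * m) ⊕ Fin (2 * n)) ℝ)
    (hanti : Γᵀ = -Γ) (hpure : Γ * Γ = -1) :
    ∃ (OA : Matrix (Fin (2 * m)) (Fin (2 * m)) ℝ)
      (OB : Matrix (Fin (2 * n)) (Fin (2 * n)) ℝ)
      (ν : Fin m → ℝ)
      (e : (Fin (2 * m) ⊕ Fin (2 * n)) ≃ ((Fin 4 × Fin m) ⊕ (Fin 2 × Fin (n - m)))),
      OA ∈ Matrix.orthogonalGroup (Fin (2 * m)) ℝ ∧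
      OB ∈ Matrix.orthogonalGroup (Fin (2 * n)) ℝ ∧
      (∀ k, ν k ∈ Set.Icc (0 : ℝ) 1) ∧
      (∀ x : Fin (2 * m), ∃ (i : Fin 4) (k : Fin m),
        (i : ℕ) < 2 ∧ e (Sum.inl x) = Sum.inl (i, k)) ∧
      (Matrix.fromBlocks OA 0 0 OB) * Γ * (Matrix.fromBlocks OA 0 0 OB)ᵀ
        = (Matrix.fromBlocks
            (Matrix.blockDiagonal fun k : Fin m =>
              gammaBlock (ν k) (Real.sqrt (1 - ν k ^ 2))) 0 0
            (Matrix.blockDiagonal fun _ : Fin (n - m) => Jblock)).submatrix e e := by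
  classical
  obtain ⟨r, rfl⟩ := Nat.exists_eq_add_of_le hmn
  rw [Nat.add_sub_cancel_left]
  obtain ⟨X, Z, V, Y, rfl⟩ : ∃ X Z V Y, Γ = Matrix.fromBlocks X Z V Y :=
    ⟨_, _, _, _, (Matrix.fromBlocks_toBlocks Γ).symm⟩
  rw [Matrix.fromBlocks_transpose, Matrix.fromBlocks_neg, Matrix.fromBlocks_inj] at hanti
  rw [Matrix.fromBlocks_multiply, ← Matrix.fromBlocks_one, Matrix.fromBlocks_neg,
    Matrix.fromBlocks_inj] at hpure
  obtain ⟨tX, tV, tZ, tY⟩ := hanti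
  obtain ⟨p11, p12, p21, p22⟩ := hpure
  rw [neg_zero] at p12 p21
  obtain ⟨a, b, c, ν, hν, haa, hbb, hcc, hbc, ha0, ha1, hC, hb0, hb1, hc0, hc1⟩ :=
    abstract_form m r (E := EuclideanSpace ℝ (Fin (2 * m)))
      (F := EuclideanSpace ℝ (Fin (2 * (m + r)))) (by simp) (by simp)
      (Matrix.toEuclideanLin X) (Matrix.toEuclideanLin Y) (Matrix.toEuclideanLin V)
      (Matrix.toEuclideanLin Z)
      (by intro x y; rw [lin_adj, tX]; simp)
      (by intro x y; rw [lin_adj, tY]; simp)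
      (by intro x y; rw [lin_adj, tV]; simp)
      (by intro x; rw [lin_mul_apply, lin_mul_apply, ← LinearMap.add_apply, ← map_add, p11]
          simp)
      (by intro x; rw [lin_mul_apply, lin_mul_apply, ← LinearMap.add_apply, ← map_add, p21]
          simp)
      (by intro x; rw [lin_mul_apply, lin_mul_apply, ← LinearMap.add_apply, ← map_add, p12]
          simp)
      (by intro x; rw [lin_mul_apply, lin_mul_apply, ← LinearMap.add_apply, ← map_add, p22]
          simp)
  have hcb : ∀ k i l j, inner ℝ (c k i) (b l j) = 0 := by
    intro k i l j; rw [real_inner_comm, hbc]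
  have hna : ∀ k i, ‖a k i‖ = 1 := fun k i => norm_one_of (by rw [haa]; simp)
  have hnb : ∀ k i, ‖b k i‖ = 1 := fun k i => norm_one_of (by rw [hbb]; simp)
  have hnc : ∀ k i, ‖c k i‖ = 1 := fun k i => norm_one_of (by rw [hcc]; simp)
  let fA : Fin (2 * m) ≃ Fin 2 × Fin m := finProdFinEquiv.symm
  let fB : Fin (2 * (m + r)) ≃ (Fin 2 × Fin m) ⊕ (Fin 2 × Fin r) :=
    Fintype.equivOfCardEq (by simp; ring)
  let pa : Fin 2 × Fin m → EuclideanSpace ℝ (Fin (2 * m)) := fun x => a x.2 x.1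
  let pb : (Fin 2 × Fin m) ⊕ (Fin 2 × Fin r) → EuclideanSpace ℝ (Fin (2 * (m + r))) :=
    Sum.elim (fun x => b x.2 x.1) (fun x => c x.2 x.1)
  have hpa : ∀ x y, inner ℝ (pa x) (pa y) = if x = y then 1 else 0 := by
    rintro ⟨i, k⟩ ⟨j, l⟩
    simp only [pa, haa, Prod.mk.injEq, and_comm]
  have hpb : ∀ x y, inner ℝ (pb x) (pb y) = if x = y then 1 else 0 := by
    rintro (⟨i, k⟩ | ⟨i, k⟩) (⟨j, l⟩ | ⟨j, l⟩) <;>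
    simp [hnb, hnc, pb, hbb, hcc, hbc, hcb, Prod.mk.injEq, and_comm]
  refine ⟨Matrix.of fun x i => pa (fA x) i, Matrix.of fun x i => pb (fB x) i, ν,
    (Equiv.sumCongr fA fB).trans (modeEquiv m r), ?_, ?_, fun k => ⟨(hν k).1, (hν k).2⟩, ?_, ?_⟩
  · exact orth_mem (fun x => pa (fA x)) (fun x y => by rw [hpa]; simp)
  · exact orth_mem (fun x => pb (fB x)) (fun x y => by rw [hpb]; simp)
  · intro x
    refine ⟨Fin.castAdd 2 (fA x).1, (fA x).2, ?_, ?_⟩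
    · exact (fA x).1.2
    · rfl
  · rw [Matrix.fromBlocks_transpose, Matrix.fromBlocks_multiply, Matrix.fromBlocks_multiply]
    simp only [Matrix.zero_mul, Matrix.mul_zero, Matrix.transpose_zero, add_zero, zero_add]
    have hZ : ∀ x y, inner ℝ (pa x) (Matrix.toEuclideanLin Z (pb y))
        = - inner ℝ (Matrix.toEuclideanLin V (pa x)) (pb y) := by
      intro x y; rw [lin_adj, tV]; simp
    ext x y
    rcases x with x | x <;> rcases y with y | y
    · rw [Matrix.fromBlocks_apply₁₁, entry_eq X (fun x => pa (fA x)) (fun x => pa (fA x))]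
      simp only [Matrix.submatrix_apply, Equiv.trans_apply, Equiv.sumCongr_apply, Sum.map_inl]
      generalize fA x = x
      generalize fA y = y
      obtain ⟨i, k⟩ := x
      obtain ⟨j, l⟩ := y
      by_cases hkl : k = l <;>
      fin_cases i <;> fin_cases j <;>
      simp [hna, hnb, hnc, pa, ha0, ha1, inner_smul_right, haa, modeEquiv, gammaBlock, hkl,
        Matrix.blockDiagonal_apply, finSumFinEquiv]
    · rw [Matrix.fromBlocks_apply₁₂, entry_eq Z (fun x => pa (fA x)) (fun x => pb (fB x)), hZ]
      simp only [Matrix.submatrix_apply, Equiv.trans_apply, Equiv.sumCongr_apply, Sum.map_inl,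
        Sum.map_inr]
      generalize fA x = x
      generalize fB y = y
      obtain ⟨i, k⟩ := x
      obtain ⟨j, l⟩ | ⟨j, l⟩ := y
      · by_cases hkl : k = l <;>
        fin_cases i <;> fin_cases j <;>
        simp [hna, hnb, hnc, pa, pb, hC, inner_smul_left, hbb, modeEquiv, gammaBlock, hkl,
          Matrix.blockDiagonal_apply, finSumFinEquiv]
      · simp [hna, hnb, hnc, pa, pb, hC, inner_smul_left, hbc, modeEquiv]
    · rw [Matrix.fromBlocks_apply₂₁, entry_eq V (fun x => pb (fB x)) (fun x => pa (fA x))]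
      simp only [Matrix.submatrix_apply, Equiv.trans_apply, Equiv.sumCongr_apply, Sum.map_inl,
        Sum.map_inr]
      generalize fB x = x
      generalize fA y = y
      obtain ⟨j, l⟩ := y
      obtain ⟨i, k⟩ | ⟨i, k⟩ := x
      · by_cases hkl : k = l <;>
        fin_cases i <;> fin_cases j <;>
        simp [hna, hnb, hnc, pa, pb, hC, inner_smul_right, hbb, modeEquiv, gammaBlock, hkl,
          Matrix.blockDiagonal_apply, finSumFinEquiv]
      · simp [hna, hnb, hnc, pa, pb, hC, inner_smul_right, hcb, modeEquiv]
    · rw [Matrix.fromBlocks_apply₂₂, entry_eq Y (fun x => pb (fB x)) (fun x => pb (fB x))]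
      simp only [Matrix.submatrix_apply, Equiv.trans_apply, Equiv.sumCongr_apply, Sum.map_inr]
      generalize fB x = x
      generalize fB y = y
      obtain ⟨i, k⟩ | ⟨i, k⟩ := x <;> obtain ⟨j, l⟩ | ⟨j, l⟩ := y
      · by_cases hkl : k = l <;>
        fin_cases i <;> fin_cases j <;>
        simp [hnb, hnc, pb, hb0, hb1, inner_smul_right, hbb, modeEquiv, gammaBlock, hkl,
          Matrix.blockDiagonal_apply, finSumFinEquiv]
      · fin_cases j <;> simp [hnb, hnc, pb, hc0, hc1, hbc, modeEquiv]
      · fin_cases j <;> simp [hnb, hnc, pb, hb0, hb1, hcb, inner_smul_right, modeEquiv]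
      · by_cases hkl : k = l <;>
        fin_cases i <;> fin_cases j <;>
        simp [hnb, hnc, pb, hc0, hc1, hcc, modeEquiv, Jblock, hkl, Matrix.blockDiagonal_apply]
end

section
/- Let x̃ ∈ (0, 1]. Then −(1/(2π)) ∫₀^{x̃} log(1 − x + x²) · √((x̃ − x)/x) / (1 − x) dx = Re[ 2√(1 − x̃) · Log( (√(1 − x̃) + √(1 − x̃·e^{iπ/3})) / (√(1 − x̃) + 1) ) − 2·Log( (1 + √(1 − x̃·e^{iπ/3}))/2 ) ], where Log and the complex square root are taken with the principal branch. In particular, with x̃ = 4ℓ(1 − ℓ) this gives the closed form of the thermodynamic nonlocal-magic density 𝒥(ℓ) = lim_{L→∞} (1/L)·𝔼_Γ[M₂,₊^{NL}(ψ_Γ)] of the Gaussian Haar ensemble. -/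
/-- The Poisson kernel at `-(1-b)/(1+b)` in the angular variable. -/
lemma nmd_kernel (a b : ℝ) (hb0 : 0 ≤ b) (_hb1 : b < 1) (hab : b ^ 2 = 1 - a) (φ : ℝ) :
    poissonKernel 0 ((-((1 - b) / (1 + b)) : ℝ) : ℂ) (circleMap 0 1 φ)
      = b / (1 - a * (1 - Real.cos φ) / 2) := by
  have ha : a = 1 - b ^ 2 := by linarith
  have h1 : (0 : ℝ) < 1 + b := by linarith
  have hz : ‖circleMap 0 1 φ‖ = 1 := by simp
  have hn : ‖circleMap 0 1 φ - ((-((1 - b) / (1 + b)) : ℝ) : ℂ)‖ ^ 2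
      = 1 + 2 * ((1 - b) / (1 + b)) * Real.cos φ + ((1 - b) / (1 + b)) ^ 2 := by
    rw [← Complex.normSq_eq_norm_sq, Complex.normSq_apply]
    have hre : (circleMap 0 1 φ).re = Real.cos φ := by simp [circleMap, Complex.exp_ofReal_mul_I_re]
    have him : (circleMap 0 1 φ).im = Real.sin φ := by simp [circleMap, Complex.exp_ofReal_mul_I_im]
    rw [Complex.sub_re, Complex.sub_im, hre, him, Complex.ofReal_re, Complex.ofReal_im]
    nlinarith [Real.sin_sq_add_cos_sq φ]
  rw [poissonKernel_def, sub_zero, sub_zero, hn, hz, Complex.norm_real, Real.norm_eq_abs, sq_abs]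
  have e1 : (1 : ℝ) ^ 2 - (-((1 - b) / (1 + b))) ^ 2 = b * (4 / (1 + b) ^ 2) := by
    field_simp; ring
  have e2 : 1 + 2 * ((1 - b) / (1 + b)) * Real.cos φ + ((1 - b) / (1 + b)) ^ 2
      = (1 - a * (1 - Real.cos φ) / 2) * (4 / (1 + b) ^ 2) := by
    rw [ha]; field_simp; ring
  rw [e1, e2, mul_div_mul_right _ _ (by positivity)]

/-- Circle integral of a harmonic function against `1 - b P`. -/
lemma nmd_circle (a b : ℝ) (hb0 : 0 ≤ b) (hb1 : b < 1) (hab : b ^ 2 = 1 - a)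
    (u : ℂ → ℝ) (hu : InnerProductSpace.HarmonicOnNhd u (Metric.closedBall 0 1)) :
    ∫ φ in (0 : ℝ)..Real.pi, (u (circleMap 0 1 φ) + u (circleMap 0 1 (2 * Real.pi - φ))) *
      (1 - b * (b / (1 - a * (1 - Real.cos φ) / 2)))
      = 2 * Real.pi * (u 0 - b * u ((-((1 - b) / (1 + b)) : ℝ) : ℂ)) := by
  have hUc : Continuous fun φ : ℝ => u (circleMap 0 1 φ) := by
    rw [← continuousOn_univ]
    refine ContinuousOn.comp (t := Metric.closedBall 0 1) (fun x hx => ?_)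
      (continuous_circleMap 0 1).continuousOn (fun x _ => by simp)
    exact ((hu x hx).1.continuousAt).continuousWithinAt
  have hPc : Continuous fun φ : ℝ => b / (1 - a * (1 - Real.cos φ) / 2) := by
    rcases hb0.eq_or_lt with h | h
    · simp [← h, continuous_const]
    · refine Continuous.div (by fun_prop) (by fun_prop) (fun φ => ?_)
      have ha : 0 < a := by nlinarith
      have : 0 < 1 - a * (1 - Real.cos φ) / 2 := by nlinarith [Real.neg_one_le_cos φ, pow_pos h 2]
      exact this.ne'
  set P : ℝ → ℝ := fun φ => b / (1 - a * (1 - Real.cos φ) / 2) with hP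
  have hPs : ∀ φ, P (2 * Real.pi - φ) = P φ := by intro φ; simp [hP, Real.cos_two_pi_sub]
  have hcont : Continuous fun φ : ℝ => u (circleMap 0 1 φ) * (1 - b * P φ) :=
    hUc.mul (continuous_const.sub (continuous_const.mul hPc))
  have hfull : ∫ φ in (0 : ℝ)..Real.pi, (u (circleMap 0 1 φ) + u (circleMap 0 1 (2 * Real.pi - φ))) *
      (1 - b * P φ) = ∫ φ in (0 : ℝ)..(2 * Real.pi), u (circleMap 0 1 φ) * (1 - b * P φ) := by
    rw [← intervalIntegral.integral_add_adjacent_intervals (b := Real.pi)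
      (hcont.intervalIntegrable _ _) (hcont.intervalIntegrable _ _)]
    have h2 : ∫ φ in Real.pi..(2 * Real.pi), u (circleMap 0 1 φ) * (1 - b * P φ)
        = ∫ φ in (0 : ℝ)..Real.pi, u (circleMap 0 1 (2 * Real.pi - φ)) * (1 - b * P φ) := by
      have := intervalIntegral.integral_comp_sub_left (a := 0) (b := Real.pi)
        (fun φ : ℝ => u (circleMap 0 1 φ) * (1 - b * P φ)) (2 * Real.pi)
      simp only [hPs] at this
      rw [this]; congr 1 <;> ring
    rw [h2, ← intervalIntegral.integral_add (hcont.intervalIntegrable _ _)]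
    · congr 1; ext φ; ring
    · apply Continuous.intervalIntegrable
      have := hcont.comp (continuous_const.sub continuous_id : Continuous fun φ : ℝ => 2 * Real.pi - φ)
      simpa [Function.comp_def, hPs] using this
  rw [hfull]
  have hm : ∫ φ in (0 : ℝ)..(2 * Real.pi), u (circleMap 0 1 φ) = 2 * Real.pi * u 0 := by
    have h := InnerProductSpace.HarmonicOnNhd.circleAverage_eq (c := 0) (R := 1) (f := u)
      (by simpa using hu)
    rw [Real.circleAverage_def, smul_eq_mul] at h
    rw [← h]; field_simp
  have hp : b * ∫ φ in (0 : ℝ)..(2 * Real.pi), P φ * u (circleMap 0 1 φ)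
      = b * (2 * Real.pi * u ((-((1 - b) / (1 + b)) : ℝ) : ℂ)) := by
    rcases hb0.eq_or_lt with h | h
    · simp [← h]
    · congr 1
      have h := InnerProductSpace.HarmonicOnNhd.circleAverage_poissonKernel_smul
        (c := 0) (R := 1) (f := u) (w := ((-((1 - b) / (1 + b)) : ℝ) : ℂ)) hu (by
          rw [mem_ball_zero_iff, Complex.norm_real, Real.norm_eq_abs, abs_neg, abs_of_nonneg
            (div_nonneg (by linarith) (by linarith)), div_lt_one (by linarith)]
          linarith)
      rw [Real.circleAverage_def, smul_eq_mul] at h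
      rw [← h]
      simp only [Pi.smul_apply', smul_eq_mul, nmd_kernel a b hb0 hb1 hab, hP]
      field_simp
  have : ∀ φ, u (circleMap 0 1 φ) * (1 - b * P φ)
      = u (circleMap 0 1 φ) - b * (P φ * u (circleMap 0 1 φ)) := fun φ => by ring
  simp only [this]
  have hPU : Continuous fun φ : ℝ => b * (P φ * u (circleMap 0 1 φ)) :=
    continuous_const.mul (hPc.mul hUc)
  rw [intervalIntegral.integral_sub (hUc.intervalIntegrable _ _)
    (hPU.intervalIntegrable _ _), intervalIntegral.integral_const_mul, hp, hm]
  ring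

/-- The change of variables `x = a (1 - cos φ) / 2`. -/
lemma nmd_subst (a : ℝ) (ha : 0 < a) (g : ℝ → ℝ) :
    ∫ x in (0 : ℝ)..a, g x
      = ∫ φ in (0 : ℝ)..Real.pi, (a * Real.sin φ / 2) * g (a * (1 - Real.cos φ) / 2) := by
  have himg : (fun φ : ℝ => a * (1 - Real.cos φ) / 2) '' Set.Ioo 0 Real.pi = Set.Ioo 0 a := by
    ext x; constructor
    · rintro ⟨φ, ⟨h0, h1⟩, rfl⟩
      have c1 : Real.cos φ < 1 := by
        simpa using Real.cos_lt_cos_of_nonneg_of_le_pi le_rfl h1.le h0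
      have c2 : -1 < Real.cos φ := by
        simpa using Real.cos_lt_cos_of_nonneg_of_le_pi h0.le le_rfl h1
      constructor
      · simp only; nlinarith
      · simp only; nlinarith
    · rintro ⟨h0, h1⟩
      have hxa : x / a < 1 := (div_lt_one ha).2 h1
      have hx0 : 0 < x / a := div_pos h0 ha
      refine ⟨Real.arccos (1 - 2 * (x / a)), ⟨?_, ?_⟩, ?_⟩
      · exact Real.arccos_pos.2 (by linarith)
      · refine lt_of_le_of_ne (Real.arccos_le_pi _) (fun h => ?_)
        have := Real.arccos_eq_pi.1 h
        linarith
      · simp only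
        rw [Real.cos_arccos (by linarith) (by linarith)]
        field_simp; ring
  rw [intervalIntegral.integral_of_le ha.le, intervalIntegral.integral_of_le Real.pi_pos.le,
    MeasureTheory.integral_Ioc_eq_integral_Ioo, MeasureTheory.integral_Ioc_eq_integral_Ioo, ← himg,
    MeasureTheory.integral_image_eq_integral_abs_deriv_smul (f' := fun φ => a * Real.sin φ / 2)
      measurableSet_Ioo]
  · refine MeasureTheory.setIntegral_congr_fun measurableSet_Ioo (fun φ hφ => ?_)
    have := Real.sin_pos_of_mem_Ioo hφ
    simp only [smul_eq_mul]
    rw [abs_of_pos (by positivity)]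
  · intro φ _
    have h := (((Real.hasDerivAt_cos φ).const_sub 1).const_mul a).div_const 2
    simpa using h.hasDerivWithinAt
  · intro x hx y hy hxy
    simp only at hxy
    apply Real.injOn_cos ⟨hx.1.le, hx.2.le⟩ ⟨hy.1.le, hy.2.le⟩
    have : a * Real.cos x = a * Real.cos y := by linarith
    exact mul_left_cancel₀ ha.ne' this

/-- The weight after substitution. -/
lemma nmd_weight (a b φ : ℝ) (ha : 0 < a) (ha1 : a ≤ 1) (hab : b ^ 2 = 1 - a)
    (hφ : φ ∈ Set.Ioo 0 Real.pi) :
    (a * Real.sin φ / 2) * (Real.sqrt ((a - a * (1 - Real.cos φ) / 2) /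
      (a * (1 - Real.cos φ) / 2)) / (1 - a * (1 - Real.cos φ) / 2))
      = 1 - b * (b / (1 - a * (1 - Real.cos φ) / 2)) := by
  have hs := Real.sin_pos_of_mem_Ioo hφ
  have c1 : Real.cos φ < 1 := by
    simpa using Real.cos_lt_cos_of_nonneg_of_le_pi le_rfl hφ.2.le hφ.1
  have c2 : -1 < Real.cos φ := by
    simpa using Real.cos_lt_cos_of_nonneg_of_le_pi hφ.1.le le_rfl hφ.2
  have hd : 0 < 1 - Real.cos φ := by linarith
  have hq : (a - a * (1 - Real.cos φ) / 2) / (a * (1 - Real.cos φ) / 2)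
      = (Real.sin φ / (1 - Real.cos φ)) ^ 2 := by
    rw [div_pow, Real.sin_sq]; field_simp; ring
  rw [hq, Real.sqrt_sq (by positivity)]
  have hx : 0 < 1 - a * (1 - Real.cos φ) / 2 := by nlinarith
  generalize hX : 1 - a * (1 - Real.cos φ) / 2 = X at *
  have : a * Real.sin φ / 2 * (Real.sin φ / (1 - Real.cos φ)) = a * (1 + Real.cos φ) / 2 := by
    have h := Real.sin_sq φ
    field_simp
    rw [h]; ring
  rw [← mul_div_assoc, this]
  field_simp
  rw [hab, ← hX]; ring

/-- Nonvanishing of the linear factor on the closed disc. -/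
lemma nmd_ne (c : ℂ) (hc : 0 < c.re) (z : ℂ) (hz : ‖z‖ ≤ 1) : ((1 + c) + (1 - c) * z) / 2 ≠ 0 := by
  intro h
  have h' : 1 + c = -((1 - c) * z) := by
    rw [div_eq_zero_iff] at h
    rcases h with h | h
    · linear_combination h
    · norm_num at h
  have h2 : ‖1 + c‖ ≤ ‖1 - c‖ := by
    rw [h', norm_neg, norm_mul]
    exact mul_le_of_le_one_right (norm_nonneg _) hz
  have h3 : ‖1 + c‖ ^ 2 ≤ ‖1 - c‖ ^ 2 := by gcongr
  rw [← Complex.normSq_eq_norm_sq, ← Complex.normSq_eq_norm_sq, Complex.normSq_apply,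
    Complex.normSq_apply] at h3
  simp at h3
  nlinarith

open Real intervalIntegral Complex

/-- Closed form of the thermodynamic nonlocal-magic density: for xt ∈ (0, 1],
−(1/(2π)) ∫₀^{xt} log(1 − x + x²)·√((xt−x)/x)/(1−x) dx equals
Re[ 2√(1−xt)·Log((√(1−xt) + √(1 − xte^{iπ/3}))/(√(1−xt) + 1)) − 2·Log((1 + √(1 − xte^{iπ/3}))/2) ],
with principal branches. -/
theorem nonlocal_magic_density_closed_form (xt : ℝ) (hx : xt ∈ Set.Ioc (0 : ℝ) 1) :
    -(1 / (2 * Real.pi)) *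
        ∫ x in (0 : ℝ)..xt,
          Real.log (1 - x + x ^ 2) * (Real.sqrt ((xt - x) / x) / (1 - x))
      = (2 * (Real.sqrt (1 - xt) : ℂ) *
            Complex.log
              (((Real.sqrt (1 - xt) : ℂ) +
                  (1 - (xt : ℂ) * Complex.exp ((Real.pi / 3 : ℝ) * Complex.I)) ^ ((1 : ℂ) / 2)) /
                ((Real.sqrt (1 - xt) : ℂ) + 1)) -
          2 * Complex.log
              ((1 + (1 - (xt : ℂ) * Complex.exp ((Real.pi / 3 : ℝ) * Complex.I)) ^ ((1 : ℂ) / 2)) /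
                2)).re := by
  obtain ⟨ha, ha1⟩ := hx
  set b := Real.sqrt (1 - xt) with hb
  have hb0 : 0 ≤ b := Real.sqrt_nonneg _
  have hab : b ^ 2 = 1 - xt := Real.sq_sqrt (by linarith)
  have hb1 : b < 1 := by nlinarith
  set w : ℂ := Complex.exp ((Real.pi / 3 : ℝ) * Complex.I) with hw
  have hwre : w.re = 1 / 2 := by rw [hw, Complex.exp_ofReal_mul_I_re, Real.cos_pi_div_three]
  have hwim : w.im = √3 / 2 := by rw [hw, Complex.exp_ofReal_mul_I_im, Real.sin_pi_div_three]
  have h3 : (√3) ^ 2 = 3 := Real.sq_sqrt (by norm_num)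
  set c : ℂ := (1 - (xt : ℂ) * w) ^ ((1 : ℂ) / 2) with hc
  have hre0 : 0 < (1 - (xt : ℂ) * w).re := by simp [hwre]; linarith
  have hne0 : (1 - (xt : ℂ) * w) ≠ 0 := by intro h; rw [h] at hre0; simp at hre0
  have hc2 : c ^ 2 = 1 - (xt : ℂ) * w := by
    rw [hc, one_div]; exact Complex.cpow_nat_inv_pow _ two_ne_zero
  have hcre : 0 < c.re := by
    rw [hc, Complex.cpow_def_of_ne_zero hne0, Complex.exp_re]
    apply mul_pos (Real.exp_pos _)
    have him : (Complex.log (1 - (xt : ℂ) * w) * (1 / 2)).im = (1 - (xt : ℂ) * w).arg / 2 := by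
      rw [show (1 / 2 : ℂ) = ((1 / 2 : ℝ) : ℂ) by push_cast; rfl, Complex.im_mul_ofReal,
        Complex.log_im]; ring
    rw [him]
    have := abs_lt.1 (Complex.abs_arg_lt_pi_div_two_iff.2 (Or.inl hre0))
    apply Real.cos_pos_of_mem_Ioo
    constructor <;> linarith [Real.pi_pos]
  set u : ℂ → ℝ := fun z => Real.log ‖((1 + c) + (1 - c) * z) / 2‖ with hu
  have hharm : InnerProductSpace.HarmonicOnNhd u (Metric.closedBall 0 1) := by
    intro z hz
    apply AnalyticAt.harmonicAt_log_norm
    · fun_prop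
    · exact nmd_ne c hcre z (by simpa using hz)
  have key := nmd_circle xt b hb0 hb1 hab u hharm
  have hu0 : u 0 = Real.log ‖(1 + c) / 2‖ := by simp [hu]
  have hur : u ((-((1 - b) / (1 + b)) : ℝ) : ℂ) = Real.log ‖((b : ℂ) + c) / ((b : ℂ) + 1)‖ := by
    simp only [hu]
    congr 2
    have : (1 + b : ℂ) ≠ 0 := by exact_mod_cast (by linarith : (1 + b : ℝ) ≠ 0)
    have h' : (b + 1 : ℂ) ≠ 0 := by rwa [add_comm]
    push_cast
    field_simp
    ring
  have hI : ∫ x in (0 : ℝ)..xt, Real.log (1 - x + x ^ 2) * (Real.sqrt ((xt - x) / x) / (1 - x))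
      = 2 * (2 * Real.pi * (u 0 - b * u ((-((1 - b) / (1 + b)) : ℝ) : ℂ))) := by
    rw [nmd_subst xt ha, ← key, ← intervalIntegral.integral_const_mul,
      intervalIntegral.integral_of_le Real.pi_pos.le,
      intervalIntegral.integral_of_le Real.pi_pos.le,
      MeasureTheory.integral_Ioc_eq_integral_Ioo, MeasureTheory.integral_Ioc_eq_integral_Ioo]
    refine MeasureTheory.setIntegral_congr_fun measurableSet_Ioo (fun φ hφ => ?_)
    rw [← nmd_weight xt b φ ha ha1 hab hφ]
    have hlog : Real.log (1 - xt * (1 - Real.cos φ) / 2 + (xt * (1 - Real.cos φ) / 2) ^ 2)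
        = 2 * (u (circleMap 0 1 φ) + u (circleMap 0 1 (2 * Real.pi - φ))) := by
      simp only [hu]
      have n1 := nmd_ne c hcre (circleMap 0 1 φ) (by simp)
      have n2 := nmd_ne c hcre (circleMap 0 1 (2 * Real.pi - φ)) (by simp)
      rw [← Real.log_mul (norm_ne_zero_iff.2 n1) (norm_ne_zero_iff.2 n2), ← norm_mul]
      have e1 : circleMap 0 1 φ = Real.cos φ + Real.sin φ * Complex.I := by
        simp [circleMap, Complex.exp_mul_I]
      have e2 : circleMap 0 1 (2 * Real.pi - φ) = Real.cos φ - Real.sin φ * Complex.I := by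
        have : circleMap 0 1 (2 * Real.pi - φ)
            = (Real.cos (2 * Real.pi - φ) : ℂ) + (Real.sin (2 * Real.pi - φ) : ℝ) * Complex.I := by
          rw [circleMap, Complex.exp_mul_I, Complex.ofReal_cos, Complex.ofReal_sin,
            Complex.ofReal_one, one_mul, zero_add]
        rw [this, Real.cos_two_pi_sub, Real.sin_two_pi_sub]; push_cast; ring
      have hprod : ((1 + c) + (1 - c) * circleMap 0 1 φ) / 2 *
          (((1 + c) + (1 - c) * circleMap 0 1 (2 * Real.pi - φ)) / 2)
          = 1 - ((xt * (1 - Real.cos φ) / 2 : ℝ) : ℂ) * w := by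
        have hsc : (Real.sin φ : ℂ) ^ 2 + (Real.cos φ : ℂ) ^ 2 = 1 := by
          exact_mod_cast Real.sin_sq_add_cos_sq φ
        rw [e1, e2]
        push_cast at hsc ⊢
        linear_combination (1 - c) ^ 2 / 4 * hsc + (1 - Complex.cos φ) / 2 * hc2
          - (1 - c) ^ 2 / 4 * (Complex.sin φ) ^ 2 * Complex.I_sq
      rw [hprod]
      generalize xt * (1 - Real.cos φ) / 2 = x
      have : 1 - x + x ^ 2 = ‖1 - (x : ℂ) * w‖ ^ 2 := by
        rw [← Complex.normSq_eq_norm_sq, Complex.normSq_apply]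
        simp [hwre, hwim]
        nlinarith
      rw [this, Real.log_pow]; norm_num
    rw [hlog]; ring
  rw [hI, hu0, hur]
  have hR : ∀ z v : ℂ, (2 * (b : ℂ) * Complex.log z - 2 * Complex.log v).re
      = 2 * b * Real.log ‖z‖ - 2 * Real.log ‖v‖ := by
    intro z v
    simp [Complex.log_re]
  rw [hR]
  field_simp
  ring
end
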